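/- In the Vaisman Lie algebra g = ℝA ⋉ h_{2n-1} of the previous setup (brackets [e_{2i-1},e_{2i}]=B, [A,e_{2i-1}]=a_i e_{2i}, [A,e_{2i}]=-a_i e_{2i-1}, complex structure JA=B, Je_{2i-1}=e_{2i}), the canonical generator η = μ ∧ ω₁ ∧ ⋯ ∧ ω_{n-1} of Λ^{(n,0)}g*, where μ = α + iβ and ω_j = e^{2j-1} + ie^{2j}, is closed (dη = 0) if and only if a₁ + a₂ + ⋯ + a_{n-1} = 0. -/

import Mathlib

/-- Remove the entries at two positions `i < j` from a tuple of length `m+2`. -/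
def removeTwo {α : Type*} {m : ℕ} (v : Fin (m + 2) → α) (i j : Fin (m + 2))
    (hij : i < j) : Fin m → α :=
  fun k =>
    v (j.succAbove ((Fin.mk i.1 (by
      have h1 := j.isLt
      have h2 : i.1 < j.1 := hij
      omega) : Fin (m + 1)).succAbove k))

/-- The Chevalley–Eilenberg differential of a complex-valued `(m+1)`-form `η`
on a Lie algebra:
`dη(v₀,…,v_{m+1}) = ∑_{i<j} (-1)^{i+j} η([vᵢ,vⱼ], v₀,…,v̂ᵢ,…,v̂ⱼ,…)`. -/
noncomputable def ceDiff {g : Type*} [LieRing g] {m : ℕ} (η : (Fin (m + 1) → g) → ℂ)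
    (v : Fin (m + 2) → g) : ℂ :=
  ∑ i : Fin (m + 2), ∑ j : Fin (m + 2),
    if hij : i < j then
      (-1 : ℂ) ^ (i.1 + j.1) * η (Fin.cons ⁅v i, v j⁆ (removeTwo v i j hij))
    else 0

/-- The wedge `μ ∧ ω₁ ∧ ⋯ ∧ ω_m` of the `(1,0)`-forms `μ = α + iβ` and
`ωⱼ = e^{2j-1} + i e^{2j}`, evaluated via the determinant formula for wedges
of 1-forms. -/
noncomputable def etaForm {g : Type*} [AddCommGroup g] [Module ℝ g] {m : ℕ}
    (α β : g →ₗ[ℝ] ℝ) (φf φw : Fin m → g →ₗ[ℝ] ℝ)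
    (v : Fin (m + 1) → g) : ℂ :=
  Matrix.det (Matrix.of fun i l : Fin (m + 1) =>
    Fin.cases ((α (v l) : ℂ) + Complex.I * (β (v l) : ℂ))
      (fun j => (φf j (v l) : ℂ) + Complex.I * (φw j (v l) : ℂ)) i)

/-!
A coframe `θ = (θ¹, …, θᴺ)` whose structure equations read `dθ = Γ ∧ θ`, with `Γ` a matrix of
1-forms, satisfies `d(θ¹ ∧ ⋯ ∧ θᴺ) = tr Γ ∧ θ¹ ∧ ⋯ ∧ θᴺ`: differentiating one factor at a time lets
`Γ` act as a derivation on a form of top degree, where it acts by its trace. On the Vaisman algebra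
`dωⱼ = -i aⱼ α ∧ ωⱼ`, while `dμ` is a combination of the `ω̄ₖ ∧ ωₖ` and contributes nothing to the
trace. Hence `dη = -i (a₁ + ⋯ + a_m) α ∧ η`, and `α ∧ η` does not vanish at `(A, B, f₁, …, f_m)`.
-/

theorem sum_sum_ite_lt_add_swap {n : ℕ} {M : Type*} [AddCommMonoid M]
    (F : Fin (n + 1) → Fin (n + 1) → M) :
    ∑ i, ∑ j, (if i < j then F i j + F j i else 0) = ∑ i, ∑ p, F i (i.succAbove p) := by
  have hsplit (i j : Fin (n + 1)) : (if i < j then F i j + F j i else 0) =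
      (if i < j then F i j else 0) + if i < j then F j i else 0 := by
    split_ifs <;> simp
  have hoffdiag (i : Fin (n + 1)) :
      ∑ j, ((if i < j then F i j else 0) + if j < i then F i j else 0) =
        ∑ p, F i (i.succAbove p) := by
    rw [Fin.sum_univ_succAbove _ i]
    simp only [lt_irrefl, if_false, add_zero, zero_add]
    refine Finset.sum_congr rfl fun p _ => ?_
    rcases (i.succAbove_ne p).lt_or_gt with h | h <;> simp [h, h.not_gt]
  calc
    _ = ∑ i, ∑ j, (if i < j then F i j else 0) + ∑ i, ∑ j, if i < j then F j i else 0 := by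
      simp only [hsplit, Finset.sum_add_distrib]
    _ = ∑ i, ∑ j, ((if i < j then F i j else 0) + if j < i then F i j else 0) := by
      rw [Finset.sum_comm (f := fun i j => if i < j then F j i else 0)]
      simp only [Finset.sum_add_distrib]
    _ = _ := Finset.sum_congr rfl fun i _ => hoffdiag i

theorem removeTwo_succAbove {α : Type*} {m : ℕ} (u : Fin (m + 2) → α) {j : Fin (m + 2)}
    {p : Fin (m + 1)} (h : j.succAbove p < j) :
    removeTwo u (j.succAbove p) j h = p.removeNth (j.removeNth u) := by
  funext k
  simp [removeTwo, Fin.removeNth,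
    Fin.succAbove_of_castSucc_lt j p (Fin.succAbove_lt_iff_castSucc_lt j p |>.mp h)]

section AlternatingMap

variable {R V N : Type*} [CommRing R] [AddCommGroup V] [Module R V] [AddCommGroup N] [Module R N]
  {m : ℕ} (ω : V [⋀^Fin (m + 1)]→ₗ[R] N)

theorem neg_one_pow_smul_map_removeNth_update (u : Fin (m + 2) → V) (x : V) {i j : Fin (m + 2)}
    (hij : i ≠ j) :
    (-1 : ℤ) ^ i.1 • ω (i.removeNth (Function.update u j x)) =
      -((-1 : ℤ) ^ j.1 • ω (j.removeNth (Function.update u i x))) := by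
  have h := ω.neg_one_pow_smul_map_removeNth_add_eq_zero_of_eq
    (v := Function.update (Function.update u i x) j x) (by simp [hij]) hij
  rw [Fin.removeNth_update, Function.update_comm hij, Fin.removeNth_update] at h
  exact eq_neg_of_add_eq_zero_left h

theorem map_vecCons_removeTwo (u : Fin (m + 2) → V) (x : V) {i j : Fin (m + 2)} (hij : i < j) :
    ω (Matrix.vecCons x (removeTwo u i j hij)) =
      (-1 : ℤ) ^ i.1 • ω (j.removeNth (Function.update u i x)) := by
  obtain ⟨p, rfl⟩ := Fin.exists_succAbove_eq hij.ne
  rw [removeTwo_succAbove, Fin.removeNth_update_succAbove, ← Fin.insertNth_removeNth,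
    Fin.succAbove_of_castSucc_lt j p (Fin.succAbove_lt_iff_castSucc_lt j p |>.mp hij)]
  exact (ω.neg_one_pow_smul_map_insertNth p x _).symm

theorem neg_one_pow_smul_map_vecCons_sub_removeTwo (u : Fin (m + 2) → V) (x y : V)
    {i j : Fin (m + 2)} (hij : i < j) :
    (-1 : ℤ) ^ (i.1 + j.1) • ω (Matrix.vecCons (x - y) (removeTwo u i j hij)) =
      (-1 : ℤ) ^ i.1 • ω (i.removeNth (Function.update u j y)) +
        (-1 : ℤ) ^ j.1 • ω (j.removeNth (Function.update u i x)) := by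
  have hsub : ω (Matrix.vecCons (x - y) (removeTwo u i j hij)) =
      ω (Matrix.vecCons x (removeTwo u i j hij)) - ω (Matrix.vecCons y (removeTwo u i j hij)) := by
    rw [eq_sub_iff_add_eq, ← ω.map_vecCons_add, sub_add_cancel]
  have hsign : (-1 : ℤ) ^ (i.1 + j.1) * (-1) ^ i.1 = (-1) ^ j.1 := by
    rw [pow_add, mul_right_comm, ← mul_pow, neg_one_mul, neg_neg, one_pow, one_mul]
  rw [hsub, map_vecCons_removeTwo, map_vecCons_removeTwo,
    neg_one_pow_smul_map_removeNth_update ω u y hij.ne, ← smul_sub, smul_smul, hsign, smul_sub]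
  abel

end AlternatingMap

theorem ceDiff_alternatingMap_comp {R V g : Type*} [CommRing R] [AddCommGroup V] [Module R V]
    [Module R ℂ] [LieRing g] {m : ℕ} (ω : V [⋀^Fin (m + 1)]→ₗ[R] ℂ) (θ : g → V) (ρ : g → V → V)
    (hθ : ∀ x y, θ ⁅x, y⁆ = ρ y (θ x) - ρ x (θ y)) (v : Fin (m + 2) → g) :
    ceDiff (fun u => ω (θ ∘ u)) v =
      ∑ j, (-1) ^ j.1 * ∑ p, ω (Function.update (θ ∘ j.removeNth v) p
        (ρ (v j) (θ (j.removeNth v p)))) := by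
  let F (i j : Fin (m + 2)) : ℂ :=
    (-1) ^ i.1 * ω (i.removeNth (Function.update (θ ∘ v) j (ρ (v i) (θ (v j)))))
  have hterm (i j : Fin (m + 2)) (hij : i < j) :
      (-1) ^ (i.1 + j.1) * ω (θ ∘ Fin.cons ⁅v i, v j⁆ (removeTwo v i j hij)) = F i j + F j i := by
    have hcomp : θ ∘ Fin.cons ⁅v i, v j⁆ (removeTwo v i j hij) =
        Matrix.vecCons (ρ (v j) (θ (v i)) - ρ (v i) (θ (v j))) (removeTwo (θ ∘ v) i j hij) := by
      rw [← hθ]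
      exact Fin.comp_cons ..
    simpa [F, hcomp] using neg_one_pow_smul_map_vecCons_sub_removeTwo ω (θ ∘ v)
      (ρ (v j) (θ (v i))) (ρ (v i) (θ (v j))) hij
  calc
    _ = ∑ i, ∑ j, (if i < j then F i j + F j i else 0) :=
      Finset.sum_congr rfl fun i _ => Finset.sum_congr rfl fun j _ =>
        dite_congr rfl (hterm i j) fun _ => rfl
    _ = ∑ i, ∑ p, F i (i.succAbove p) := sum_sum_ite_lt_add_swap F
    _ = _ := by
      simp only [F, Fin.removeNth_update_succAbove, Finset.mul_sum]
      rfl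

section Determinant

open scoped Matrix

theorem sum_det_updateRow_mulVec {n R : Type*} [Fintype n] [DecidableEq n] [CommRing R]
    (M U : Matrix n n R) : ∑ i, (U.updateRow i (M *ᵥ U i)).det = M.trace * U.det := by
  have hcramer (i : n) : (U.updateRow i (M *ᵥ U i)).det = (Uᵀ.adjugate * (M * Uᵀ)) i i := by
    rw [← Matrix.cramer_transpose_apply, Matrix.cramer_eq_adjugate_mulVec]
    rfl
  calc
    _ = (Uᵀ.adjugate * (M * Uᵀ)).trace := Finset.sum_congr rfl fun i _ => hcramer i
    _ = (M * (Uᵀ * Uᵀ.adjugate)).trace := by rw [Matrix.trace_mul_comm, Matrix.mul_assoc]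
    _ = M.trace * U.det := by simp [Matrix.mul_adjugate, mul_comm]

theorem ceDiff_detRowAlternating_comp {g : Type*} [LieRing g] {m : ℕ} (θ : g → Fin (m + 1) → ℂ)
    (Γ : g → Matrix (Fin (m + 1)) (Fin (m + 1)) ℂ)
    (hθ : ∀ x y, θ ⁅x, y⁆ = Γ y *ᵥ θ x - Γ x *ᵥ θ y) (v : Fin (m + 2) → g) :
    ceDiff (fun u => Matrix.detRowAlternating (θ ∘ u)) v =
      ∑ j, (-1) ^ j.1 * ((Γ (v j)).trace * Matrix.detRowAlternating (θ ∘ j.removeNth v)) := by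
  rw [ceDiff_alternatingMap_comp _ θ (fun x => (Γ x *ᵥ ·)) hθ]
  refine Finset.sum_congr rfl fun j _ => congrArg _ ?_
  exact sum_det_updateRow_mulVec (Γ (v j)) (θ ∘ j.removeNth v)

end Determinant

/-- The bracket relations of the Vaisman Lie algebra `ℝA ⋉ h_{2m+1}` on the elements `A`, `B`, `fᵢ`,
`wᵢ`, which stand for the paper's `A`, `B`, `e_{2i-1}`, `e_{2i}`. -/
structure IsVaismanFrame {g ι : Type*} [LieRing g] [LieAlgebra ℝ g] [DecidableEq ι]
    (A B : g) (f w : ι → g) (a : ι → ℝ) : Prop where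
  lie_f_w : ∀ i j, ⁅f i, w j⁆ = if i = j then B else 0
  lie_f_f : ∀ i j, ⁅f i, f j⁆ = 0
  lie_w_w : ∀ i j, ⁅w i, w j⁆ = 0
  lie_A_f : ∀ i, ⁅A, f i⁆ = a i • w i
  lie_A_w : ∀ i, ⁅A, w i⁆ = -(a i) • f i
  lie_A_B : ⁅A, B⁆ = 0
  lie_B_f : ∀ i, ⁅B, f i⁆ = 0
  lie_B_w : ∀ i, ⁅B, w i⁆ = 0

/-- The linear forms `α`, `β`, `φfᵢ`, `φwᵢ` are dual to the elements `A`, `B`, `fᵢ`, `wᵢ`, which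
span `g`. -/
structure IsDualCoframe {g ι : Type*} [AddCommGroup g] [Module ℝ g] [DecidableEq ι]
    (A B : g) (f w : ι → g) (α β : g →ₗ[ℝ] ℝ) (φf φw : ι → g →ₗ[ℝ] ℝ) : Prop where
  span_eq_top : Submodule.span ℝ (Set.range (Sum.elim ![A, B] (Sum.elim f w))) = ⊤
  α_A : α A = 1
  α_B : α B = 0
  α_f : ∀ i, α (f i) = 0
  α_w : ∀ i, α (w i) = 0
  β_A : β A = 0
  β_B : β B = 1
  β_f : ∀ i, β (f i) = 0
  β_w : ∀ i, β (w i) = 0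
  φf_f : ∀ i j, φf i (f j) = if i = j then 1 else 0
  φf_w : ∀ i j, φf i (w j) = 0
  φf_A : ∀ i, φf i A = 0
  φf_B : ∀ i, φf i B = 0
  φw_w : ∀ i j, φw i (w j) = if i = j then 1 else 0
  φw_f : ∀ i j, φw i (f j) = 0
  φw_A : ∀ i, φw i A = 0
  φw_B : ∀ i, φw i B = 0

section DualCoframe

variable {g ι : Type*} [DecidableEq ι] {A B : g} {f w : ι → g} {a : ι → ℝ}

namespace IsDualCoframe

variable [AddCommGroup g] [Module ℝ g] {α β : g →ₗ[ℝ] ℝ} {φf φw : ι → g →ₗ[ℝ] ℝ}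
  (hd : IsDualCoframe A B f w α β φf φw)
include hd

theorem eq_sum [Fintype ι] (x : g) :
    x = α x • A + β x • B + ∑ i, φf i x • f i + ∑ i, φw i x • w i := by
  have hid : LinearMap.id = α.smulRight A + β.smulRight B + ∑ i, (φf i).smulRight (f i) +
      ∑ i, (φw i).smulRight (w i) := by
    refine LinearMap.ext_on_range hd.span_eq_top ?_
    rintro (k | i | i)
    · fin_cases k
      · simp [hd.α_A, hd.β_A, hd.φf_A, hd.φw_A]
      · simp [hd.α_B, hd.β_B, hd.φf_B, hd.φw_B]
    · simp [hd.α_f, hd.β_f, hd.φf_f, hd.φw_f]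
    · simp [hd.α_w, hd.β_w, hd.φf_w, hd.φw_w]
  simpa using LinearMap.congr_fun hid x

end IsDualCoframe

namespace IsVaismanFrame

variable [LieRing g] [LieAlgebra ℝ g] {α β : g →ₗ[ℝ] ℝ} {φf φw : ι → g →ₗ[ℝ] ℝ}
  (hv : IsVaismanFrame A B f w a) (hd : IsDualCoframe A B f w α β φf φw)
include hv hd

theorem lie_eq [Fintype ι] (x y : g) :
    ⁅x, y⁆ = (∑ i, (φf i x * φw i y - φw i x * φf i y)) • B
      + ∑ i, (a i * (φw i x * α y - α x * φw i y)) • f i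
      + ∑ i, (a i * (α x * φf i y - φf i x * α y)) • w i := by
  have hA : ⁅A, y⁆ = ∑ i, (a i * φf i y) • w i - ∑ i, (a i * φw i y) • f i := by
    conv_lhs => rw [hd.eq_sum y]
    simp [lie_sum, hv.lie_A_f, hv.lie_A_w, hv.lie_A_B, smul_smul, mul_comm, sub_eq_add_neg]
  have hB : ⁅B, y⁆ = 0 := by
    rw [hd.eq_sum y]
    simp [lie_sum, hv.lie_B_f, hv.lie_B_w, ← lie_skew B A, hv.lie_A_B]
  have hf (i : ι) : ⁅f i, y⁆ = φw i y • B - (a i * α y) • w i := by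
    conv_lhs => rw [hd.eq_sum y]
    simp [lie_sum, hv.lie_f_w, hv.lie_f_f, ← lie_skew (f i) A, hv.lie_A_f, ← lie_skew (f i) B,
      hv.lie_B_f, smul_smul, mul_comm, sub_eq_neg_add]
  have hw (i : ι) : ⁅w i, y⁆ = (a i * α y) • f i - φf i y • B := by
    conv_lhs => rw [hd.eq_sum y]
    simp [lie_sum, hv.lie_w_w, ← lie_skew (w i) (f _), hv.lie_f_w, ← lie_skew (w i) A, hv.lie_A_w,
      ← lie_skew (w i) B, hv.lie_B_w, smul_smul, mul_comm, sub_eq_add_neg]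
  calc
    ⁅x, y⁆ = α x • ⁅A, y⁆ + β x • ⁅B, y⁆ + ∑ i, φf i x • ⁅f i, y⁆ + ∑ i, φw i x • ⁅w i, y⁆ := by
      conv_lhs => rw [hd.eq_sum x]
      simp [sum_lie]
    _ = _ := by
      simp only [hA, hB, hf, hw, smul_sub, smul_smul, smul_zero, add_zero, Finset.smul_sum,
        Finset.sum_smul, sub_smul, mul_sub, Finset.sum_sub_distrib, mul_left_comm]
      abel

theorem α_lie [Finite ι] (x y : g) : α ⁅x, y⁆ = 0 := by
  have := Fintype.ofFinite ι
  simp [hv.lie_eq hd x y, hd.α_B, hd.α_f, hd.α_w]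

theorem β_lie [Fintype ι] (x y : g) : β ⁅x, y⁆ = ∑ i, (φf i x * φw i y - φw i x * φf i y) := by
  simp [hv.lie_eq hd x y, hd.β_B, hd.β_f, hd.β_w]

theorem φf_lie [Finite ι] (i : ι) (x y : g) :
    φf i ⁅x, y⁆ = a i * (φw i x * α y - α x * φw i y) := by
  have := Fintype.ofFinite ι
  simp [hv.lie_eq hd x y, hd.φf_B, hd.φf_f, hd.φf_w]

theorem φw_lie [Finite ι] (i : ι) (x y : g) :
    φw i ⁅x, y⁆ = a i * (α x * φf i y - φf i x * α y) := by
  have := Fintype.ofFinite ι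
  simp [hv.lie_eq hd x y, hd.φw_B, hd.φw_f, hd.φw_w]

end IsVaismanFrame

end DualCoframe

section CanonicalForm

variable {g : Type*} [AddCommGroup g] [Module ℝ g] {m : ℕ} (a : Fin m → ℝ) (α β : g →ₗ[ℝ] ℝ)
  (φf φw : Fin m → g →ₗ[ℝ] ℝ)

/-- The `(1,0)`-coframe `(μ, ω₁, …, ω_m)`, with `μ = α + iβ` and `ωⱼ = φfⱼ + i φwⱼ`. -/
noncomputable def complexCoframe (x : g) : Fin (m + 1) → ℂ :=
  Fin.cons (α x + Complex.I * β x) fun j => φf j x + Complex.I * φw j x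

theorem etaForm_eq_detRowAlternating (v : Fin (m + 1) → g) :
    etaForm α β φf φw v = Matrix.detRowAlternating (complexCoframe α β φf φw ∘ v) :=
  Matrix.det_transpose (Matrix.of (complexCoframe α β φf φw ∘ v))

variable {α β φf φw} in
theorem etaForm_cons_B_f {A B : g} {f w : Fin m → g} (hd : IsDualCoframe A B f w α β φf φw) :
    etaForm α β φf φw (Fin.cons B f) = Complex.I := by
  have hdiag : Matrix.of (complexCoframe α β φf φw ∘ Fin.cons B f) =
      Matrix.diagonal (Fin.cons Complex.I fun _ => 1) := by
    ext s t
    cases s using Fin.cases <;> cases t using Fin.cases <;>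
      simp [complexCoframe, Matrix.diagonal_apply, hd.α_B, hd.β_B, hd.φf_B, hd.φw_B, hd.α_f,
        hd.β_f, hd.φf_f, hd.φw_f, eq_comm, apply_ite Complex.ofReal]
  calc
    _ = (Matrix.of (complexCoframe α β φf φw ∘ Fin.cons B f)).det :=
      etaForm_eq_detRowAlternating ..
    _ = Complex.I := by simp [hdiag, Fin.prod_univ_succ]

/-- The matrix of 1-forms `Γ` with `dθ = Γ ∧ θ` for the coframe `θ = (μ, ω₁, …, ω_m)` of a Vaisman
Lie algebra. Its rows express `dμ = -½ ∑ ω̄ₖ ∧ ωₖ` and `dωⱼ = -i aⱼ α ∧ ωⱼ`. -/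
noncomputable def connectionMatrix (x : g) : Matrix (Fin (m + 1)) (Fin (m + 1)) ℂ :=
  Matrix.of (Fin.cons (Fin.cons 0 fun k => -(1 / 2) * (φf k x - Complex.I * φw k x))
    fun j => Pi.single j.succ (-Complex.I * a j * α x))

theorem trace_connectionMatrix (x : g) :
    (connectionMatrix a α φf φw x).trace = -Complex.I * (∑ j, a j : ℝ) * α x := by
  simp [connectionMatrix, Matrix.trace, Fin.sum_univ_succ, Finset.mul_sum, Finset.sum_mul]

end CanonicalForm

section Vaisman

open scoped Matrix

variable {g : Type*} [LieRing g] [LieAlgebra ℝ g] {m : ℕ} {A B : g} {f w : Fin m → g}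
  {a : Fin m → ℝ} {α β : g →ₗ[ℝ] ℝ} {φf φw : Fin m → g →ₗ[ℝ] ℝ}

theorem complexCoframe_lie (hv : IsVaismanFrame A B f w a)
    (hd : IsDualCoframe A B f w α β φf φw) (x y : g) :
    complexCoframe α β φf φw ⁅x, y⁆ =
      connectionMatrix a α φf φw y *ᵥ complexCoframe α β φf φw x -
        connectionMatrix a α φf φw x *ᵥ complexCoframe α β φf φw y := by
  funext i
  cases i using Fin.cases with
  | zero =>
    simp only [complexCoframe, connectionMatrix, Matrix.mulVec, dotProduct, Fin.sum_univ_succ,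
      Matrix.of_apply, Pi.sub_apply, Fin.cons_zero, Fin.cons_succ, zero_mul, zero_add,
      hv.α_lie hd, hv.β_lie hd, ← Finset.sum_sub_distrib]
    push_cast
    rw [zero_add, Finset.mul_sum]
    exact Finset.sum_congr rfl fun k _ => by ring
  | succ j =>
    simp only [complexCoframe, connectionMatrix, Matrix.mulVec, Matrix.of_apply, Pi.sub_apply,
      Fin.cons_succ, single_dotProduct, hv.φf_lie hd, hv.φw_lie hd]
    push_cast
    linear_combination (-(a j : ℂ) * (α x * φw j y - α y * φw j x)) * Complex.I_mul_I

theorem ceDiff_etaForm (hv : IsVaismanFrame A B f w a) (hd : IsDualCoframe A B f w α β φf φw)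
    (v : Fin (m + 2) → g) :
    ceDiff (etaForm α β φf φw) v = -Complex.I * (∑ j, a j : ℝ) *
      ∑ i, (-1) ^ i.1 * (α (v i) * etaForm α β φf φw (i.removeNth v)) := by
  have heta : etaForm α β φf φw =
      fun u => Matrix.detRowAlternating (complexCoframe α β φf φw ∘ u) :=
    funext (etaForm_eq_detRowAlternating α β φf φw)
  rw [heta, ceDiff_detRowAlternating_comp _ _ (complexCoframe_lie hv hd), Finset.mul_sum]
  refine Finset.sum_congr rfl fun i _ => ?_
  rw [trace_connectionMatrix]
  ring

end Vaisman

/-- In the Vaisman Lie algebra `g = ℝA ⋉ h_{2n-1}` (with `m = n - 1`, basis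
`{A, B, f₁, w₁, …, f_m, w_m}`, brackets `[fᵢ, wᵢ] = B`, `[A, fᵢ] = aᵢ wᵢ`,
`[A, wᵢ] = -aᵢ fᵢ`, complex structure `JA = B`, `Jfᵢ = wᵢ`), the canonical
generator `η = μ ∧ ω₁ ∧ ⋯ ∧ ω_m` of `Λ^{(n,0)}g*`, where `μ = α + iβ` and
`ωⱼ = f^j + i w^j`, is closed if and only if `a₁ + ⋯ + a_m = 0`. -/
theorem canonical_form_closed_iff {g : Type*} [LieRing g] [LieAlgebra ℝ g]
    (m : ℕ)
    (A B : g) (f w : Fin m → g) (a : Fin m → ℝ)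
    (hindep : LinearIndependent ℝ (Sum.elim ![A, B] (Sum.elim f w)))
    (hspan : Submodule.span ℝ (Set.range (Sum.elim ![A, B] (Sum.elim f w))) = ⊤)
    -- Lie brackets
    (b1 : ∀ i j, ⁅f i, w j⁆ = if i = j then B else 0)
    (b2 : ∀ i j, ⁅f i, f j⁆ = 0) (b3 : ∀ i j, ⁅w i, w j⁆ = 0)
    (b4 : ∀ i, ⁅A, f i⁆ = a i • w i) (b5 : ∀ i, ⁅A, w i⁆ = -(a i) • f i)
    (b6 : ⁅A, B⁆ = 0) (b7 : ∀ i, ⁅B, f i⁆ = 0) (b8 : ∀ i, ⁅B, w i⁆ = 0)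
    -- dual basis 1-forms
    (α β : g →ₗ[ℝ] ℝ) (φf φw : Fin m → g →ₗ[ℝ] ℝ)
    (d1 : α A = 1) (d2 : α B = 0) (d3 : ∀ i, α (f i) = 0) (d4 : ∀ i, α (w i) = 0)
    (d5 : β A = 0) (d6 : β B = 1) (d7 : ∀ i, β (f i) = 0) (d8 : ∀ i, β (w i) = 0)
    (d9 : ∀ i j, φf i (f j) = if i = j then 1 else 0)
    (d10 : ∀ i j, φf i (w j) = 0) (d11 : ∀ i, φf i A = 0) (d12 : ∀ i, φf i B = 0)
    (d13 : ∀ i j, φw i (w j) = if i = j then 1 else 0)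
    (d14 : ∀ i j, φw i (f j) = 0) (d15 : ∀ i, φw i A = 0) (d16 : ∀ i, φw i B = 0) :
    (∀ v : Fin (m + 2) → g, ceDiff (etaForm α β φf φw) v = 0) ↔
      ∑ j, a j = 0 := by
  have hv : IsVaismanFrame A B f w a := ⟨b1, b2, b3, b4, b5, b6, b7, b8⟩
  have hd : IsDualCoframe A B f w α β φf φw :=
    ⟨hspan, d1, d2, d3, d4, d5, d6, d7, d8, d9, d10, d11, d12, d13, d14, d15, d16⟩
  constructor
  · intro hclosed
    have hABf := hclosed (Fin.cons A (Fin.cons B f))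
    have hα (i : Fin (m + 1)) : α ((Fin.cons B f : Fin (m + 1) → g) i) = 0 := by
      cases i using Fin.cases <;> simp [d2, d3]
    rw [ceDiff_etaForm hv hd, Fin.sum_univ_succ] at hABf
    have hsum : ((∑ j, a j : ℝ) : ℂ) = 0 := by
      simpa [hα, d1, etaForm_cons_B_f hd] using hABf
    exact_mod_cast hsum
  · intro hsum v
    rw [ceDiff_etaForm hv hd, hsum]
    simp
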